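/- arXiv:2509.14529 — 3 statements merged into one kernel-verified Lean document; each statement's English description precedes it below -/
import Mathlib

section
/- Vanishing Hermite moments force Gaussian law (key step in the proof of Theorem 5.2): Let (Ω, 𝓕, ℙ) be a probability space and ξ : Ω → ℝ a random variable such that for some constant C > 0 one has 𝔼[|ξ|^n] ≤ 2·n!·C^n for every n ∈ ℕ. Let g ∈ ℝ be such that H_n(ξ, g) is integrable and 𝔼[H_n(ξ, g)] = 0 for every integer n ≥ 1. Then g ≤ 0 and the law of ξ equals gaussianReal 0 (−2g). -/
open MeasureTheory ProbabilityTheory Finset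

/-- `H_n(a,b) := ∑_{p+2q=n} a^p b^q / (p! q!)`; `n!·H_n(u,−1/2)` is the `n`-th
probabilists' Hermite polynomial at `u`. -/
noncomputable def hermiteH (n : ℕ) (a b : ℝ) : ℝ :=
  ∑ pq ∈ (Finset.range (n + 1) ×ˢ Finset.range (n + 1)).filter
      (fun pq => pq.1 + 2 * pq.2 = n),
    a ^ pq.1 * b ^ pq.2 / ((Nat.factorial pq.1 : ℝ) * (Nat.factorial pq.2 : ℝ))

lemma hermite_aux_prod (a b : ℕ → ℂ) (A B : ℂ) (hA : HasSum a A) (hB : HasSum b B)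
    (ha : Summable fun n => ‖a n‖) (hb : Summable fun n => ‖b n‖) :
    HasSum (fun n : ℕ => ∑ x ∈ (Finset.range (n + 1) ×ˢ Finset.range (n + 1)).filter
      (fun pq => pq.1 + 2 * pq.2 = n), a x.1 * b x.2) (A * B) := by
  have h : Summable (fun x : ℕ × ℕ => a x.1 * b x.2) := summable_mul_of_summable_norm ha hb
  have h2 : HasSum (fun x : ℕ × ℕ => a x.1 * b x.2) (A * B) := hA.mul hB h
  have h3 := h2.tsum_fiberwise (fun pq : ℕ × ℕ => pq.1 + 2 * pq.2)
  refine (congrArg (fun f => HasSum f (A * B)) (funext fun n => ?_)).mp h3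
  have hset : ((fun pq : ℕ × ℕ => pq.1 + 2 * pq.2) ⁻¹' {n}) =
      (((Finset.range (n + 1) ×ˢ Finset.range (n + 1)).filter
      (fun pq => pq.1 + 2 * pq.2 = n) : Finset (ℕ × ℕ)) : Set (ℕ × ℕ)) := by
    ext ⟨p, q⟩
    simp
    omega
  rw [hset, Finset.tsum_subtype' _ (fun x : ℕ × ℕ => a x.1 * b x.2)]

set_option maxHeartbeats 400000 in
lemma hermite_aux_mgf
    {Ω : Type*} [MeasurableSpace Ω] (P : Measure Ω) [IsProbabilityMeasure P]
    (ξ : Ω → ℝ) (hξ : Measurable ξ)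
    (C : ℝ) (hC : 0 < C)
    (hmom : ∀ n : ℕ, Integrable (fun ω => |ξ ω| ^ n) P ∧
      (∫ ω, |ξ ω| ^ n ∂P) ≤ 2 * (Nat.factorial n : ℝ) * C ^ n)
    (g : ℝ)
    (hherm : ∀ n : ℕ, 1 ≤ n →
      Integrable (fun ω => hermiteH n (ξ ω) g) P ∧
      (∫ ω, hermiteH n (ξ ω) g ∂P) = 0) (z : ℂ) (hz : C * ‖z‖ < 1) :
    complexMGF ξ P z * Complex.exp (g * z ^ 2) = 1 := by
  have hint : ∀ n : ℕ, Integrable (fun ω => ξ ω ^ n) P := fun n => by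
    refine (hmom n).1.mono' (by fun_prop) (ae_of_all _ fun ω => ?_)
    simp
  -- the moment series
  set F : ℕ → Ω → ℂ := fun n ω => (z * ξ ω) ^ n / (n.factorial : ℂ) with hF
  have hFform : ∀ n ω, F n ω = (z ^ n / (n.factorial : ℂ)) * ((ξ ω ^ n : ℝ) : ℂ) := by
    intro n ω; simp only [hF]; push_cast; ring
  have hFint : ∀ n, Integrable (F n) P := by
    intro n
    have := ((hint n).ofReal (𝕜 := ℂ)).const_mul (z ^ n / (n.factorial : ℂ))
    exact this.congr (ae_of_all _ fun ω => (hFform n ω).symm)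
  have hFnorm : ∀ n, ∫ ω, ‖F n ω‖ ∂P ≤ 2 * (C * ‖z‖) ^ n := by
    intro n
    have : ∀ ω, ‖F n ω‖ = (‖z‖ ^ n / n.factorial) * |ξ ω| ^ n := by
      intro ω; simp [hF, mul_pow]; ring
    simp_rw [this]
    rw [integral_const_mul]
    have hpos : (0 : ℝ) < n.factorial := by positivity
    calc _ ≤ (‖z‖ ^ n / n.factorial) * (2 * (Nat.factorial n : ℝ) * C ^ n) := by
          gcongr; exact (hmom n).2
      _ = _ := by field_simp; ring
  have hgeo : Summable fun n : ℕ => 2 * (C * ‖z‖) ^ n :=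
    (summable_geometric_of_lt_one (by positivity) hz).mul_left 2
  have hFsum : Summable fun n => ∫ ω, ‖F n ω‖ ∂P :=
    Summable.of_nonneg_of_le (fun n => integral_nonneg fun _ => norm_nonneg _) hFnorm hgeo
  have hS := hasSum_integral_of_summable_integral_norm hFint hFsum
  have hSval : ∫ ω, ∑' n, F n ω ∂P = complexMGF ξ P z := by
    simp only [complexMGF]
    congr 1; ext ω
    rw [Complex.exp_eq_exp_ℂ, NormedSpace.exp_eq_tsum_div]
  rw [hSval] at hS
  have hSnorm : Summable fun n => ‖∫ ω, F n ω ∂P‖ :=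
    Summable.of_nonneg_of_le (fun n => norm_nonneg _) (fun n => norm_integral_le_integral_norm _) hFsum
  have hE : HasSum (fun q : ℕ => ((g : ℂ) * z ^ 2) ^ q / (q.factorial : ℂ))
      (Complex.exp (g * z ^ 2)) := by
    rw [Complex.exp_eq_exp_ℂ]; exact NormedSpace.expSeries_div_hasSum_exp _
  have hEnorm : Summable fun q : ℕ => ‖((g : ℂ) * z ^ 2) ^ q / (q.factorial : ℂ)‖ :=
    NormedSpace.norm_expSeries_div_summable _
  have hprod := hermite_aux_prod _ _ _ _ hS hE hSnorm hEnorm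
  have hone : HasSum (fun n : ℕ => if n = 0 then (1 : ℂ) else 0) 1 := by
    simpa using hasSum_ite_eq (0 : ℕ) (1 : ℂ)
  refine hprod.unique ?_
  refine (congrArg (fun f => HasSum f (1 : ℂ)) (funext fun n => ?_)).mpr hone
  have hH : ∫ ω, hermiteH n (ξ ω) g ∂P = if n = 0 then 1 else 0 := by
    split_ifs with h
    · subst h
      have : ∀ a, hermiteH 0 a g = 1 := by
        intro a
        have : (Finset.range (0 + 1) ×ˢ Finset.range (0 + 1)).filter
          (fun pq : ℕ × ℕ => pq.1 + 2 * pq.2 = 0) = {(0, 0)} := by decide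
        rw [hermiteH, this]; simp
      simp [this]
    · exact (hherm n (by omega)).2
  have hcast : (if n = 0 then (1 : ℂ) else 0) = z ^ n * ((∫ ω, hermiteH n (ξ ω) g ∂P : ℝ) : ℂ) := by
    rw [hH]; split_ifs with h <;> simp [h]
  rw [hcast]
  simp only [hermiteH]
  rw [integral_finsetSum _ (fun pq _ => by
    simpa [mul_div_assoc] using ((hint pq.1).mul_const _))]
  push_cast
  rw [Finset.mul_sum]
  refine Finset.sum_congr rfl fun pq hpq => ?_
  have hn : pq.1 + 2 * pq.2 = n := (Finset.mem_filter.1 hpq).2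
  simp_rw [hFform]
  rw [integral_const_mul, integral_complex_ofReal]
  simp_rw [mul_div_assoc]
  rw [integral_mul_const, ← hn]
  push_cast
  rw [pow_add, pow_mul, mul_pow]
  field_simp
  
/-- vanishing Hermite moments force a Gaussian law.  If
`𝔼[|ξ|^n] ≤ 2 n! C^n` for all `n` and `𝔼[H_n(ξ,g)] = 0` for all `n ≥ 1`, then
`g ≤ 0` and the law of `ξ` is `N(0, −2g)`. -/
theorem vanishing_hermite_moments_gaussian
    {Ω : Type*} [MeasurableSpace Ω] (P : Measure Ω) [IsProbabilityMeasure P]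
    (ξ : Ω → ℝ) (hξ : Measurable ξ)
    (C : ℝ) (hC : 0 < C)
    (hmom : ∀ n : ℕ, Integrable (fun ω => |ξ ω| ^ n) P ∧
      (∫ ω, |ξ ω| ^ n ∂P) ≤ 2 * (Nat.factorial n : ℝ) * C ^ n)
    (g : ℝ)
    (hherm : ∀ n : ℕ, 1 ≤ n →
      Integrable (fun ω => hermiteH n (ξ ω) g) P ∧
      (∫ ω, hermiteH n (ξ ω) g ∂P) = 0) :
    g ≤ 0 ∧ Measure.map ξ P = gaussianReal 0 (Real.toNNReal (-2 * g)) := by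
  have key := hermite_aux_mgf P ξ hξ C hC hmom g hherm
  have hg : g ≤ 0 := by
    by_contra! hg
    have h2 := (hherm 2 (by norm_num)).2
    have hform : ∀ a, hermiteH 2 a g = a ^ 2 / 2 + g := by
      intro a
      have : (Finset.range (2 + 1) ×ˢ Finset.range (2 + 1)).filter
        (fun pq : ℕ × ℕ => pq.1 + 2 * pq.2 = 2) = {(2, 0), (0, 1)} := by decide
      rw [hermiteH, this, Finset.sum_pair (by decide)]; simp
    simp_rw [hform] at h2
    have hint : Integrable (fun ω => ξ ω ^ 2 / 2) P := by
      simpa using (hmom 2).1.div_const 2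
    rw [integral_add hint (integrable_const _)] at h2
    have : 0 ≤ ∫ ω, ξ ω ^ 2 / 2 ∂P := integral_nonneg fun ω => by positivity
    simp at h2
    linarith
  refine ⟨hg, ?_⟩
  have hexp : Metric.ball (0 : ℝ) C⁻¹ ⊆ integrableExpSet ξ P := by
    intro t ht
    by_contra hnot
    have hn : C * ‖(t : ℂ)‖ < 1 := by
      rw [mem_ball_zero_iff] at ht
      rw [Complex.norm_real]
      calc _ < C * C⁻¹ := by gcongr
        _ = 1 := by field_simp
    have := key t hn
    rw [complexMGF_ofReal, mgf_undef hnot] at this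
    simp at this
  have h0 : (0 : ℝ) ∈ interior (integrableExpSet ξ P) :=
    mem_interior.2 ⟨_, hexp, Metric.isOpen_ball, Metric.mem_ball_self (by positivity)⟩
  have han := analyticOnNhd_complexMGF (X := ξ) (μ := P)
  have hconn : IsPreconnected {z : ℂ | z.re ∈ interior (integrableExpSet ξ P)} :=
    ((convex_integrableExpSet.interior).linear_preimage Complex.reLm).isPreconnected
  have hG : AnalyticOnNhd ℂ (fun z : ℂ => Complex.exp (-(g * z ^ 2)))
      {z : ℂ | z.re ∈ interior (integrableExpSet ξ P)} := by
    exact fun z _ => Differentiable.analyticAt (by fun_prop) z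
  have hev : complexMGF ξ P =ᶠ[nhds 0] (fun z : ℂ => Complex.exp (-(g * z ^ 2))) := by
    filter_upwards [Metric.ball_mem_nhds (0 : ℂ) (inv_pos.2 hC)] with z hz
    rw [mem_ball_zero_iff] at hz
    have := key z (by
      calc _ < C * C⁻¹ := by gcongr
        _ = 1 := by field_simp)
    rw [Complex.exp_neg]
    exact eq_inv_of_mul_eq_one_left this
  have heq := han.eqOn_of_preconnected_of_eventuallyEq hG hconn (z₀ := 0) (by simpa using h0) hev
  have := Measure.isProbabilityMeasure_map (μ := P) hξ.aemeasurable
  refine Measure.ext_of_charFun (funext fun t => ?_)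
  rw [charFun_gaussianReal, ← complexMGF_mul_I hξ.aemeasurable,
    heq (show _ by simpa using h0)]
  have : ((Real.toNNReal (-2 * g) : ℝ) : ℂ) = -2 * g := by
    rw [Real.coe_toNNReal _ (by linarith)]; push_cast; ring
  rw [this]
  show Complex.exp _ = _
  congr 1
  rw [mul_pow, Complex.I_sq]
  push_cast
  ring
end

section
/- Chen–Hermite balancing identities (derived in the proof of Theorem 5.2): Let (Ω, 𝓕, ℙ) be a probability space, T > 0, let X_t : Ω → ℝ (t ∈ [0,T]) be random variables and g : [0,T] → ℝ a function. Assume there is a constant C > 0 with 𝔼[|X_t − X_s|^n] ≤ 2·n!·C^n for all n ∈ ℕ and all 0 ≤ s ≤ t ≤ T, and that 𝔼[H_n(X_t − X_s, g(t) − g(s))] = 0 for every integer n ≥ 1 and all 0 ≤ s ≤ t ≤ T. Then for all 0 ≤ s ≤ u ≤ t ≤ T and every integer n ≥ 2: ∑_{i=1}^{n−1} 𝔼[ H_i(X_u − X_s, g(u) − g(s)) · H_{n−i}(X_t − X_u, g(t) − g(u)) ] = 0. -/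
open MeasureTheory Finset

lemma hermiteH_eq_coeff (n : ℕ) (a b : ℝ) :
    hermiteH n a b = PowerSeries.coeff n
      (PowerSeries.rescale a (PowerSeries.exp ℝ) *
        PowerSeries.expand 2 two_ne_zero (PowerSeries.rescale b (PowerSeries.exp ℝ))) := by
  rw [PowerSeries.coeff_mul]
  unfold hermiteH
  have h1 : ∀ x ∈ antidiagonal n,
      (PowerSeries.coeff x.1) (PowerSeries.rescale a (PowerSeries.exp ℝ)) *
        (PowerSeries.coeff x.2) (PowerSeries.expand 2 two_ne_zero
          (PowerSeries.rescale b (PowerSeries.exp ℝ))) ≠ 0 → 2 ∣ x.2 := by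
    intro x _ hne
    by_contra h
    rw [PowerSeries.coeff_expand_of_not_dvd _ _ _ h] at hne
    simp at hne
  rw [← Finset.sum_filter_of_ne h1]
  refine Finset.sum_nbij' (fun pq => (pq.1, 2 * pq.2)) (fun x => (x.1, x.2 / 2)) ?_ ?_ ?_ ?_ ?_
  · rintro ⟨p, q⟩ h
    simp at h ⊢
    omega
  · rintro ⟨p, q⟩ h
    simp at h ⊢
    omega
  · rintro ⟨p, q⟩ h
    simp
  · rintro ⟨p, q⟩ h
    simp at h ⊢
    omega
  · rintro ⟨p, q⟩ h
    simp only
    rw [PowerSeries.coeff_expand_mul, PowerSeries.coeff_rescale, PowerSeries.coeff_rescale,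
      PowerSeries.coeff_exp, PowerSeries.coeff_exp]
    simp
    field_simp

lemma hermiteH_chen (n : ℕ) (a b c d : ℝ) :
    hermiteH n (a + c) (b + d) =
      ∑ x ∈ antidiagonal n, hermiteH x.1 a b * hermiteH x.2 c d := by
  simp_rw [hermiteH_eq_coeff]
  rw [← PowerSeries.coeff_mul, ← PowerSeries.exp_mul_exp_eq_exp_add,
    ← PowerSeries.exp_mul_exp_eq_exp_add,
    map_mul (PowerSeries.expand 2 two_ne_zero)]
  congr 1
  ring

lemma hermiteH_zero (a b : ℝ) : hermiteH 0 a b = 1 := by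
  simp [hermiteH, Finset.sum_filter]

lemma hermiteH_even (k : ℕ) (a b : ℝ) :
    hermiteH (2 * k) a b = ∑ x ∈ antidiagonal k,
      a ^ (2 * x.1) / (Nat.factorial (2 * x.1) : ℝ) * (b ^ x.2 / (Nat.factorial x.2 : ℝ)) := by
  unfold hermiteH
  refine Finset.sum_nbij' (fun pq => (pq.1 / 2, pq.2)) (fun x => (2 * x.1, x.2)) ?_ ?_ ?_ ?_ ?_
  · rintro ⟨p, q⟩ h
    simp at h ⊢
    omega
  · rintro ⟨p, q⟩ h
    simp at h ⊢
    omega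
  · rintro ⟨p, q⟩ h
    simp at h ⊢
    omega
  · rintro ⟨p, q⟩ h
    simp
  · rintro ⟨p, q⟩ h
    simp at h ⊢
    have : 2 * (p / 2) = p := by omega
    rw [this]
    field_simp

lemma hermiteH_zero_zero (n : ℕ) (hn : 1 ≤ n) : hermiteH n 0 0 = 0 := by
  unfold hermiteH
  apply Finset.sum_eq_zero
  rintro ⟨p, q⟩ h
  simp at h ⊢
  omega

lemma hermiteH_roots_finite (n : ℕ) (b : ℝ) : {a : ℝ | hermiteH n a b = 0}.Finite := by
  set p : Polynomial ℝ := ∑ pq ∈ (Finset.range (n + 1) ×ˢ Finset.range (n + 1)).filter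
      (fun pq => pq.1 + 2 * pq.2 = n),
      Polynomial.monomial pq.1 (b ^ pq.2 / ((Nat.factorial pq.1 : ℝ) * (Nat.factorial pq.2 : ℝ)))
    with hp
  have hev : ∀ a, p.eval a = hermiteH n a b := by
    intro a
    simp only [hp, hermiteH, Polynomial.eval_finsetSum, Polynomial.eval_monomial]
    exact Finset.sum_congr rfl fun x _ => by ring
  have hcoeff : p.coeff n = 1 / (Nat.factorial n : ℝ) := by
    simp only [hp, Polynomial.finsetSum_coeff, Polynomial.coeff_monomial]
    rw [Finset.sum_eq_single (n, 0)]
    · simp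
    · rintro ⟨x, y⟩ h hne
      simp at h hne ⊢
      omega
    · simp
  have hp0 : p ≠ 0 := by
    intro h0
    rw [h0] at hcoeff
    simp at hcoeff
    exact Nat.factorial_ne_zero n (by exact_mod_cast hcoeff.symm)
  have := Polynomial.finite_setOfPred_isRoot hp0
  refine this.subset ?_
  intro a ha
  simpa [Polynomial.IsRoot, hev] using ha

set_option linter.unusedSectionVars false

section aux
variable {Ω : Type*} [MeasurableSpace Ω] {P : Measure Ω} [IsProbabilityMeasure P]

lemma aemeas_abs {D : Ω → ℝ} (h : ∀ n : ℕ, Integrable (fun ω => |D ω| ^ n) P) :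
    AEMeasurable (fun ω => |D ω|) P := by
  simpa using (h 1).aemeasurable

lemma even_moment {D : Ω → ℝ} {b : ℝ} (h : ∀ n : ℕ, Integrable (fun ω => |D ω| ^ n) P)
    (hh : ∀ n : ℕ, 1 ≤ n → ∫ ω, hermiteH n (D ω) b ∂P = 0) (k : ℕ) :
    Integrable (fun ω => D ω ^ (2 * k)) P ∧
    ∫ ω, D ω ^ (2 * k) / (Nat.factorial (2 * k) : ℝ) ∂P = (-b) ^ k / (Nat.factorial k : ℝ) := by
  have hIntg : ∀ k : ℕ, Integrable (fun ω => D ω ^ (2 * k)) P := by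
    intro k
    refine (h (2 * k)).congr (Filter.Eventually.of_forall fun ω => ?_)
    simp only
    rw [pow_mul, pow_mul, sq_abs]
  refine ⟨hIntg k, ?_⟩
  set M : PowerSeries ℝ :=
    PowerSeries.mk fun k => ∫ ω, D ω ^ (2 * k) / (Nat.factorial (2 * k) : ℝ) ∂P with hM
  have h1 : M * PowerSeries.rescale b (PowerSeries.exp ℝ) = 1 := by
    ext k
    have h2 : PowerSeries.coeff k (M * PowerSeries.rescale b (PowerSeries.exp ℝ)) =
        ∫ ω, hermiteH (2 * k) (D ω) b ∂P := by
      simp_rw [hermiteH_even]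
      rw [integral_finsetSum _ fun i _ => ((hIntg i.1).div_const _).mul_const _,
        PowerSeries.coeff_mul]
      refine Finset.sum_congr rfl fun x _ => ?_
      rw [integral_mul_const, PowerSeries.coeff_rescale, PowerSeries.coeff_exp, hM,
        PowerSeries.coeff_mk]
      simp [div_eq_mul_inv]
    rw [h2, PowerSeries.coeff_one]
    rcases Nat.eq_zero_or_pos k with rfl | hk
    · simp [hermiteH_zero]
    · rw [hh _ (by omega), if_neg (by omega)]
  have h2 : M = PowerSeries.rescale (-b) (PowerSeries.exp ℝ) := by
    have h3 := PowerSeries.exp_mul_exp_eq_exp_add b (-b)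
    calc M = M * (PowerSeries.rescale b (PowerSeries.exp ℝ) *
          PowerSeries.rescale (-b) (PowerSeries.exp ℝ)) := by
            rw [h3]; simp
      _ = _ := by rw [← mul_assoc, h1, one_mul]
  have := congrArg (PowerSeries.coeff k) h2
  rw [hM, PowerSeries.coeff_mk, PowerSeries.coeff_rescale, PowerSeries.coeff_exp] at this
  rw [this]
  simp [div_eq_mul_inv]

lemma b_nonpos {D : Ω → ℝ} {b : ℝ} (h : ∀ n : ℕ, Integrable (fun ω => |D ω| ^ n) P)
    (hh : ∀ n : ℕ, 1 ≤ n → ∫ ω, hermiteH n (D ω) b ∂P = 0) : b ≤ 0 := by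
  have := (even_moment h hh 1).2
  have h2 : 0 ≤ ∫ ω, D ω ^ (2 * 1) / (Nat.factorial (2 * 1) : ℝ) ∂P :=
    integral_nonneg fun ω => by simp only [mul_one]; positivity
  rw [this] at h2
  simpa using h2

lemma ae_zero_of_b {D : Ω → ℝ} (h : ∀ n : ℕ, Integrable (fun ω => |D ω| ^ n) P)
    (hh : ∀ n : ℕ, 1 ≤ n → ∫ ω, hermiteH n (D ω) 0 ∂P = 0) : ∀ᵐ ω ∂P, D ω = 0 := by
  obtain ⟨h1, h2⟩ := even_moment h hh 1
  rw [integral_div] at h2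
  have h3 : ∫ ω, D ω ^ (2 * 1) ∂P = 0 := by simpa using h2
  rw [integral_eq_zero_iff_of_nonneg (fun ω => by simp only [mul_one, Pi.zero_apply]; positivity)
    h1] at h3
  filter_upwards [h3] with ω hω
  simpa using hω

lemma integral_cos_eq {D : Ω → ℝ} {b : ℝ} (h : ∀ n : ℕ, Integrable (fun ω => |D ω| ^ n) P)
    (hh : ∀ n : ℕ, 1 ≤ n → ∫ ω, hermiteH n (D ω) b ∂P = 0) (x : ℝ) :
    ∫ ω, Real.cos (x * D ω) ∂P = Real.exp (b * x ^ 2) := by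
  have hb := b_nonpos h hh
  have hIntg : ∀ k : ℕ, Integrable (fun ω => (-1) ^ k * (x * D ω) ^ (2 * k) /
      (Nat.factorial (2 * k) : ℝ)) P := by
    intro k
    refine (((even_moment h hh k).1.const_mul ((-1) ^ k * x ^ (2 * k))).div_const
      (Nat.factorial (2 * k) : ℝ)).congr
      (Filter.Eventually.of_forall fun ω => ?_)
    simp only
    rw [mul_pow x]; ring
  have hval : ∀ (c : ℝ) (k : ℕ), ∫ ω, c ^ k * (x * D ω) ^ (2 * k) /
      (Nat.factorial (2 * k) : ℝ) ∂P = (-(c * b) * x ^ 2) ^ k / (Nat.factorial k : ℝ) := by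
    intro c k
    have : ∀ ω, c ^ k * (x * D ω) ^ (2 * k) / (Nat.factorial (2 * k) : ℝ) =
      (c ^ k * x ^ (2 * k)) * (D ω ^ (2 * k) / (Nat.factorial (2 * k) : ℝ)) := by
      intro ω; rw [mul_pow x]; ring
    simp_rw [this]
    rw [integral_const_mul, (even_moment h hh k).2, pow_mul]
    rw [← mul_div_assoc, ← mul_pow, ← mul_pow]
    congr 2; ring
  have hs : Summable fun k : ℕ => ∫ ω, ‖(-1) ^ k * (x * D ω) ^ (2 * k) /
      (Nat.factorial (2 * k) : ℝ)‖ ∂P := by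
    have : ∀ k : ℕ, ∫ ω, ‖(-1) ^ k * (x * D ω) ^ (2 * k) / (Nat.factorial (2 * k) : ℝ)‖ ∂P
        = (-(1 * b) * x ^ 2) ^ k / (Nat.factorial k : ℝ) := by
      intro k
      rw [← hval]
      congr 1
      ext ω
      rw [pow_mul]
      simp [abs_mul]
      rw [← abs_mul, sq_abs]
    simp_rw [this]
    exact Real.summable_pow_div_factorial _
  have hS := hasSum_integral_of_summable_integral_norm hIntg hs
  simp_rw [fun ω => (Real.hasSum_cos (x * D ω)).tsum_eq] at hS
  refine hS.unique ?_
  simp_rw [hval]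
  have := NormedSpace.expSeries_div_hasSum_exp (b * x ^ 2)
  rw [← Real.exp_eq_exp_ℝ] at this
  simpa using this

open ProbabilityTheory in
lemma ae_abs_ne {D : Ω → ℝ} {b : ℝ} (h : ∀ n : ℕ, Integrable (fun ω => |D ω| ^ n) P)
    (hh : ∀ n : ℕ, 1 ≤ n → ∫ ω, hermiteH n (D ω) b ∂P = 0) (hb0 : b ≠ 0) (c : ℝ) :
    ∀ᵐ ω ∂P, |D ω| ≠ c := by
  have hb := b_nonpos h hh
  have hA := aemeas_abs h
  have hA' : AEMeasurable (fun ω => -|D ω|) P := hA.neg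
  set v : NNReal := ⟨-(2 * b), by linarith⟩ with hv
  have hvR : (v : ℝ) = -(2 * b) := rfl
  have hv0 : v ≠ 0 := by
    intro h0
    rw [h0] at hvR
    simp at hvR
    exact hb0 hvR
  have hP1 : IsProbabilityMeasure (P.map (fun ω => |D ω|)) := Measure.isProbabilityMeasure_map hA
  have hP2 : IsProbabilityMeasure (P.map (fun ω => -|D ω|)) := Measure.isProbabilityMeasure_map hA'
  have key : P.map (fun ω => |D ω|) + P.map (fun ω => -|D ω|) =
      gaussianReal 0 v + gaussianReal 0 v := by
    have hbd : ∀ (Q : Measure ℝ) [IsProbabilityMeasure Q] (x : ℝ),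
        Integrable (fun y : ℝ => Complex.exp (x * y * Complex.I)) Q := by
      intro Q _ x
      refine Integrable.of_bound (C := 1) (by fun_prop) (Filter.Eventually.of_forall fun y => ?_)
      have := Complex.norm_exp_ofReal_mul_I (x * y)
      push_cast at this
      exact this.le
    apply Measure.ext_of_charFun
    ext x
    rw [charFun_apply_real, integral_add_measure (hbd _ x) (hbd _ x), charFun_apply_real,
      integral_add_measure (hbd _ x) (hbd _ x), ← charFun_apply_real, ← charFun_apply_real,
      ← charFun_apply_real, charFun_gaussianReal, charFun_apply_real, charFun_apply_real,
      integral_map hA (by fun_prop), integral_map hA' (by fun_prop), ← integral_add]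
    · have h1 : ∀ ω, Complex.exp (x * (|D ω| : ℝ) * Complex.I) +
          Complex.exp (x * ((-|D ω| : ℝ) : ℂ) * Complex.I) =
          ((2 * Real.cos (x * D ω) : ℝ) : ℂ) := by
        intro ω
        have h2 : Real.cos (x * D ω) = Real.cos (x * |D ω|) := by
          rcases abs_choice (D ω) with h | h <;> rw [h] 
          rw [mul_neg, Real.cos_neg]
        rw [h2]
        push_cast
        rw [Complex.two_cos]
        congr 2
        ring
      simp_rw [h1]
      rw [integral_complex_ofReal, integral_const_mul, integral_cos_eq h hh x]
      have : ((x : ℂ) * ((0 : ℝ) : ℂ) * Complex.I - ((v : ℝ) : ℂ) * x ^ 2 / 2) =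
          ((b * x ^ 2 : ℝ) : ℂ) := by
        rw [hvR]; push_cast; ring
      rw [this, ← Complex.ofReal_exp]
      push_cast; ring
    · exact (hbd (P.map (fun ω => |D ω|)) x).comp_aemeasurable hA
    · exact (hbd (P.map (fun ω => -|D ω|)) x).comp_aemeasurable hA'
  have := nullSingletonClass_gaussianReal (μ := 0) hv0
  have h0 : (P.map (fun ω => |D ω|)) {c} = 0 := by
    have h1 : (P.map (fun ω => |D ω|) + P.map (fun ω => -|D ω|)) {c} = 0 := by
      rw [key]; simp
    simp only [Measure.add_apply, add_eq_zero] at h1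
    exact h1.1
  rw [Measure.map_apply_of_aemeasurable hA (measurableSet_singleton c)] at h0
  rw [ae_iff]
  simpa [Set.preimage] using h0

lemma ae_hermite_ne {D : Ω → ℝ} {b : ℝ} (h : ∀ n : ℕ, Integrable (fun ω => |D ω| ^ n) P)
    (hh : ∀ n : ℕ, 1 ≤ n → ∫ ω, hermiteH n (D ω) b ∂P = 0) (hb0 : b ≠ 0) (i : ℕ) :
    ∀ᵐ ω ∂P, hermiteH i (D ω) b ≠ 0 := by
  have h1 := (ae_ball_iff (hermiteH_roots_finite i b).countable).2
    fun a _ => ae_abs_ne h hh hb0 |a|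
  filter_upwards [h1] with ω hω h0
  exact hω (D ω) h0 rfl

lemma aemeas_even {D E : Ω → ℝ} (hD : AEMeasurable (fun ω => |D ω|) P)
    (hE : AEMeasurable (fun ω => |E ω|) P) (hDE : AEMeasurable (fun ω => |D ω + E ω|) P)
    (p q : ℕ) (hpq : Even (p + q)) : AEMeasurable (fun ω => D ω ^ p * E ω ^ q) P := by
  have hprod : AEMeasurable (fun ω => D ω * E ω) P := by
    have : (fun ω => D ω * E ω) =
        fun ω => (|D ω + E ω| ^ 2 - |D ω| ^ 2 - |E ω| ^ 2) / 2 := by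
      ext ω; simp only [sq_abs]; ring
    rw [this]
    fun_prop
  rcases Nat.even_or_odd p with hp | hp
  · have hq : Even q := by grind
    have : (fun ω => D ω ^ p * E ω ^ q) = fun ω => |D ω| ^ p * |E ω| ^ q := by
      ext ω; rw [hp.pow_abs, hq.pow_abs]
    rw [this]; fun_prop
  · have hq : Odd q := by grind
    obtain ⟨k, rfl⟩ := hp
    obtain ⟨l, rfl⟩ := hq
    have : (fun ω => D ω ^ (2 * k + 1) * E ω ^ (2 * l + 1)) =
        fun ω => |D ω| ^ (2 * k) * |E ω| ^ (2 * l) * (D ω * E ω) := by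
      ext ω; rw [(even_two_mul k).pow_abs, (even_two_mul l).pow_abs]; ring
    rw [this]; fun_prop

lemma integrable_mono {D E : Ω → ℝ} (hD : ∀ n : ℕ, Integrable (fun ω => |D ω| ^ n) P)
    (hE : ∀ n : ℕ, Integrable (fun ω => |E ω| ^ n) P) (p q : ℕ)
    (hm : AEMeasurable (fun ω => D ω ^ p * E ω ^ q) P) :
    Integrable (fun ω => D ω ^ p * E ω ^ q) P := by
  refine ((hD (p * 2)).add (hE (q * 2))).mono' hm.aestronglyMeasurable
    (Filter.Eventually.of_forall fun ω => ?_)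
  simp only [Pi.add_apply, norm_mul, norm_pow, Real.norm_eq_abs]
  rw [pow_mul, pow_mul]
  nlinarith [sq_nonneg (|D ω| ^ p - |E ω| ^ q), sq_nonneg (|D ω| ^ p + |E ω| ^ q)]

lemma prod_expand (i j : ℕ) (a b c d : ℝ) :
    hermiteH i a b * hermiteH j c d =
      ∑ x ∈ (Finset.range (i + 1) ×ˢ Finset.range (i + 1)).filter
          (fun pq => pq.1 + 2 * pq.2 = i),
        ∑ y ∈ (Finset.range (j + 1) ×ˢ Finset.range (j + 1)).filter
          (fun pq => pq.1 + 2 * pq.2 = j),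
          (b ^ x.2 / ((Nat.factorial x.1 : ℝ) * (Nat.factorial x.2 : ℝ)) *
            (d ^ y.2 / ((Nat.factorial y.1 : ℝ) * (Nat.factorial y.2 : ℝ)))) *
              (a ^ x.1 * c ^ y.1) := by
  unfold hermiteH
  rw [Finset.sum_mul_sum]
  refine Finset.sum_congr rfl fun x _ => Finset.sum_congr rfl fun y _ => ?_
  ring

end aux

/-- Chen–Hermite balancing identities.  If the increments of `X`
have uniformly bounded moments and all Hermite moments
`𝔼[H_n(X_t − X_s, g(t) − g(s))]` vanish for `n ≥ 1`, then for all
`0 ≤ s ≤ u ≤ t ≤ T` and `n ≥ 2`,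
`∑_{i=1}^{n−1} 𝔼[H_i(X_u − X_s, g(u) − g(s)) · H_{n−i}(X_t − X_u, g(t) − g(u))] = 0`. -/
theorem chen_hermite_balancing
    {Ω : Type*} [MeasurableSpace Ω] (P : Measure Ω) [IsProbabilityMeasure P]
    (T : ℝ) (hT : 0 < T)
    (X : ℝ → Ω → ℝ) (g : ℝ → ℝ)
    (C : ℝ) (hC : 0 < C)
    (hmom : ∀ n : ℕ, ∀ s t : ℝ, 0 ≤ s → s ≤ t → t ≤ T →
      Integrable (fun ω => |X t ω - X s ω| ^ n) P ∧
      (∫ ω, |X t ω - X s ω| ^ n ∂P) ≤ 2 * (Nat.factorial n : ℝ) * C ^ n)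
    (hherm : ∀ n : ℕ, 1 ≤ n → ∀ s t : ℝ, 0 ≤ s → s ≤ t → t ≤ T →
      (∫ ω, hermiteH n (X t ω - X s ω) (g t - g s) ∂P) = 0) :
    ∀ s u t : ℝ, 0 ≤ s → s ≤ u → u ≤ t → t ≤ T → ∀ n : ℕ, 2 ≤ n →
      ∑ i ∈ Finset.Icc 1 (n - 1),
        (∫ ω, hermiteH i (X u ω - X s ω) (g u - g s)
            * hermiteH (n - i) (X t ω - X u ω) (g t - g u) ∂P) = 0 := by
  intro s u t hs hsu hut htT n hn
  set D : Ω → ℝ := fun ω => X u ω - X s ω with hD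
  set E : Ω → ℝ := fun ω => X t ω - X u ω with hE
  set b := g u - g s with hb
  set d := g t - g u with hd
  have hDi : ∀ n : ℕ, Integrable (fun ω => |D ω| ^ n) P :=
    fun n => (hmom n s u hs hsu (hut.trans htT)).1
  have hEi : ∀ n : ℕ, Integrable (fun ω => |E ω| ^ n) P :=
    fun n => (hmom n u t (hs.trans hsu) hut htT).1
  have hsum : ∀ ω, X t ω - X s ω = D ω + E ω := fun ω => by simp only [hD, hE]; ring
  have hSi : ∀ n : ℕ, Integrable (fun ω => |D ω + E ω| ^ n) P := by
    intro n
    have := (hmom n s t hs (hsu.trans hut) htT).1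
    simpa only [hsum] using this
  have hDh : ∀ n : ℕ, 1 ≤ n → ∫ ω, hermiteH n (D ω) b ∂P = 0 :=
    fun n hn => hherm n hn s u hs hsu (hut.trans htT)
  have hEh : ∀ n : ℕ, 1 ≤ n → ∫ ω, hermiteH n (E ω) d ∂P = 0 :=
    fun n hn => hherm n hn u t (hs.trans hsu) hut htT
  have hSh : ∀ n : ℕ, 1 ≤ n → ∫ ω, hermiteH n (D ω + E ω) (b + d) ∂P = 0 := by
    intro n hn
    have := hherm n hn s t hs (hsu.trans hut) htT
    have hbd : g t - g s = b + d := by simp only [hb, hd]; ring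
    simpa only [hsum, hbd] using this
  have hev := aemeas_even (aemeas_abs hDi) (aemeas_abs hEi) (aemeas_abs hSi)
  change ∑ i ∈ Finset.Icc 1 (n - 1), ∫ ω, hermiteH i (D ω) b * hermiteH (n - i) (E ω) d ∂P = 0
  by_cases hcase : Even n ∨ (AEMeasurable D P ∧ AEMeasurable E P)
  · -- every monomial that occurs is measurable, so the algebraic identity can be integrated
    have hmeas : ∀ p q : ℕ, (Even n → Even (p + q)) →
        AEMeasurable (fun ω => D ω ^ p * E ω ^ q) P := by
      intro p q hpq
      rcases hcase with h | ⟨h1, h2⟩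
      · exact hev p q (hpq h)
      · exact (h1.pow_const p).mul (h2.pow_const q)
    have hIntg : ∀ x ∈ antidiagonal n,
        Integrable (fun ω => hermiteH x.1 (D ω) b * hermiteH x.2 (E ω) d) P := by
      rintro ⟨i, j⟩ hx
      simp only [HasAntidiagonal.mem_antidiagonal] at hx
      simp_rw [prod_expand]
      refine integrable_finsetSum _ fun x hx' => integrable_finsetSum _ fun y hy' => ?_
      simp only [mem_filter] at hx' hy'
      refine (integrable_mono hDi hEi _ _ (hmeas _ _ ?_)).const_mul _
      grind
    have h0 := hSh n (by omega)
    simp_rw [hermiteH_chen] at h0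
    rw [integral_finsetSum _ hIntg,
      Finset.Nat.sum_antidiagonal_eq_sum_range_succ
        (fun i j => ∫ ω, hermiteH i (D ω) b * hermiteH j (E ω) d ∂P),
      Finset.sum_range_succ, Finset.range_eq_Ico,
      Finset.sum_eq_sum_Ico_succ_bot (by omega)] at h0
    simp only [Nat.sub_zero, Nat.sub_self, hermiteH_zero, one_mul, mul_one, hDh n (by omega),
      hEh n (by omega), zero_add, add_zero] at h0
    rw [← h0]
    refine Finset.sum_congr ?_ fun _ _ => rfl
    ext i
    simp only [mem_Icc, mem_Ico]
    omega
  · -- every integrand is a.e. zero or non-measurable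
    push Not at hcase
    obtain ⟨hodd, hnm⟩ := hcase
    apply Finset.sum_eq_zero
    intro i hi
    simp only [mem_Icc] at hi
    by_cases hb0 : b = 0
    · rw [hb0] at hDh ⊢
      refine integral_eq_zero_of_ae ?_
      filter_upwards [ae_zero_of_b hDi hDh] with ω hω
      rw [hω, hermiteH_zero_zero i hi.1]; simp
    by_cases hd0 : d = 0
    · rw [hd0] at hEh ⊢
      refine integral_eq_zero_of_ae ?_
      filter_upwards [ae_zero_of_b hEi hEh] with ω hω
      rw [hω, hermiteH_zero_zero (n - i) (by omega)]; simp
    apply integral_undef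
    intro hF
    have hFm := hF.aemeasurable
    have hne : ∀ᵐ ω ∂P, hermiteH i (D ω) b * hermiteH (n - i) (E ω) d ≠ 0 := by
      filter_upwards [ae_hermite_ne hDi hDh hb0 i, ae_hermite_ne hEi hEh hd0 (n - i)]
        with ω h1 h2 using mul_ne_zero h1 h2
    have hgen : ∀ k l : ℕ, k + l = 1 → AEMeasurable (fun ω => D ω ^ k * E ω ^ l) P := by
      intro k l hkl
      have h1 : AEMeasurable (fun ω => (hermiteH i (D ω) b * hermiteH (n - i) (E ω) d) *
          (D ω ^ k * E ω ^ l)) P := by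
        simp_rw [prod_expand, Finset.sum_mul]
        refine Finset.aemeasurable_fun_sum _ fun x hx' =>
          Finset.aemeasurable_fun_sum _ fun y hy' => ?_
        simp only [mem_filter] at hx' hy'
        have h2 := (hev (x.1 + k) (y.1 + l) (by grind)).const_mul
          (b ^ x.2 / ((Nat.factorial x.1 : ℝ) * (Nat.factorial x.2 : ℝ)) *
            (d ^ y.2 / ((Nat.factorial y.1 : ℝ) * (Nat.factorial y.2 : ℝ))))
        refine h2.congr (Filter.Eventually.of_forall fun ω => ?_)
        simp only
        ring
      refine (h1.div hFm).congr ?_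
      filter_upwards [hne] with ω hω
      simp only [Pi.div_apply]
      rw [mul_div_cancel_left₀ _ hω]
    exact hnm (by simpa using hgen 1 0 rfl) (by simpa using hgen 0 1 rfl)
end

section
/- Kreps–Yan separation lemma (Lemma B.1): Let C ⊆ L^p be a norm-closed convex cone with 0 ∈ C, such that −h ∈ C for every h ∈ L^p_+, and such that C ∩ L^p_+ = {0}. Then for every f ∈ L^p_+ with f ≠ 0 there exists g ∈ L^q with g ≥ 0 ℙ-a.e., ⟨h, g⟩ ≤ 0 for every h ∈ C, and ⟨f, g⟩ > 0. (Since C is convex, norm closedness is equivalent to closedness in the weak topology used in the paper.) -/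
open MeasureTheory Filter Topology
open scoped ENNReal NNReal

lemma ky_exists_measure {Ω : Type*} [MeasurableSpace Ω] (P : Measure Ω) [IsProbabilityMeasure P]
    (p : ℝ≥0∞) (hp : p ≠ ∞) [Fact (1 ≤ p)] (φ : Lp ℝ p P →L[ℝ] ℝ)
    (hφ : ∀ h : Lp ℝ p P, (0 : Ω → ℝ) ≤ᵐ[P] (h : Ω → ℝ) → 0 ≤ φ h) :
    ∃ ν : Measure Ω, ∀ s (hs : MeasurableSet s),
      ν s = ENNReal.ofReal (φ (indicatorConstLp p hs (measure_ne_top P s) 1)) := by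
  have hnn : ∀ s (hs : MeasurableSet s), 0 ≤ φ (indicatorConstLp p hs (measure_ne_top P s) 1) := by
    intro s hs
    apply hφ
    filter_upwards [indicatorConstLp_coeFn (p := p) (hs := hs) (hμs := measure_ne_top P s)
      (c := (1:ℝ))] with x hx
    rw [hx]
    exact Set.indicator_nonneg (fun _ _ => zero_le_one) x
  refine ⟨Measure.ofMeasurable
    (fun s hs => ENNReal.ofReal (φ (indicatorConstLp p hs (measure_ne_top P s) 1))) ?_ ?_, ?_⟩
  · simp
  · intro f hf hd
    symm
    apply (ENNReal.hasSum_iff_tendsto_nat _).2 ?_ |>.tsum_eq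
    have key : ∀ n, indicatorConstLp p (MeasurableSet.biUnion (Finset.range n).countable_toSet
        (fun i _ => hf i)) (measure_ne_top P _) (1:ℝ)
        = ∑ i ∈ Finset.range n, indicatorConstLp p (hf i) (measure_ne_top P _) (1:ℝ) := by
      intro n
      induction n with
      | zero => simp
      | succ n ih =>
        rw [Finset.sum_range_succ, ← ih, ← indicatorConstLp_disjoint_union]
        · congr 1
          ext x
          simp only [Finset.coe_range, Set.mem_Iio, Set.mem_iUnion, Set.mem_union, exists_prop]
          constructor
          · rintro ⟨i, hi, hx⟩
            rcases Nat.lt_succ_iff_lt_or_eq.1 hi with h | rfl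
            · exact Or.inl ⟨i, h, hx⟩
            · exact Or.inr hx
          · rintro (⟨i, hi, hx⟩ | hx)
            · exact ⟨i, by omega, hx⟩
            · exact ⟨n, by omega, hx⟩
        · rw [Set.disjoint_iUnion₂_left]
          intro i hi
          apply hd
          simp at hi
          omega
    have : ∀ n, ∑ i ∈ Finset.range n,
        ENNReal.ofReal (φ (indicatorConstLp p (hf i) (measure_ne_top P _) 1)) =
        ENNReal.ofReal (φ (indicatorConstLp p
          (MeasurableSet.biUnion (Finset.range n).countable_toSet
        (fun i _ => hf i)) (measure_ne_top P _) (1:ℝ))) := by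
      intro n
      rw [key, map_sum, ENNReal.ofReal_sum_of_nonneg]
      intro i _
      exact hnn _ _
    simp_rw [this]
    apply ENNReal.tendsto_ofReal
    apply (φ.continuous.tendsto _).comp
    apply tendsto_indicatorConstLp_set hp
    have h1 : Tendsto (fun n => P ((⋃ i, f i) \ (⋃ i ∈ Finset.range n, f i))) atTop (𝓝 0) := by
      have := tendsto_measure_iInter_atTop (μ := P)
        (s := fun n => (⋃ i, f i) \ (⋃ i ∈ Finset.range n, f i))
        (fun n => ((MeasurableSet.iUnion hf).diff (MeasurableSet.biUnion
          (Finset.range n).countable_toSet (fun i _ => hf i))).nullMeasurableSet) ?_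
        ⟨0, measure_ne_top P _⟩
      · have h0 : (⋂ n, (⋃ i, f i) \ ⋃ i ∈ Finset.range n, f i) = ∅ := by
          ext x
          simp only [Set.mem_iInter, Set.mem_sdiff, Set.mem_iUnion, Set.mem_empty_iff_false, iff_false,
            Finset.mem_range]
          intro h
          obtain ⟨i, hi⟩ := (h 0).1
          exact (h (i+1)).2 (by simp only [exists_prop]; exact ⟨i, by omega, hi⟩)
        rw [h0, measure_empty] at this
        exact this
      · intro a b hab x
        simp only [Set.mem_sdiff, Set.mem_iUnion, Finset.mem_range]
        rintro ⟨h, h'⟩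
        exact ⟨h, fun ⟨i, hi, hx⟩ => h' ⟨i, by omega, hx⟩⟩
    convert h1 using 3 with n
    rw [Set.symmDiff_def, Set.sdiff_eq_empty.2, Set.empty_union]
    · simp
    exact Set.iUnion₂_subset fun i _ => Set.subset_iUnion f i
  · intro s hs
    rw [Measure.ofMeasurable_apply _ hs]

lemma ky_simple {Ω : Type*} [MeasurableSpace Ω] (P : Measure Ω) [IsProbabilityMeasure P]
    (p : ℝ≥0∞) [Fact (1 ≤ p)] (φ : Lp ℝ p P →L[ℝ] ℝ)
    (hφ : ∀ h : Lp ℝ p P, (0 : Ω → ℝ) ≤ᵐ[P] (h : Ω → ℝ) → 0 ≤ φ h)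
    (ν : Measure Ω) (hν : ∀ s (hs : MeasurableSet s),
      ν s = ENNReal.ofReal (φ (indicatorConstLp p hs (measure_ne_top P s) 1)))
    (h : SimpleFunc Ω ℝ≥0) :
    ∃ hm : MemLp (fun x => (h x : ℝ)) p P, 
      ∫⁻ x, h x ∂ν = ENNReal.ofReal (φ (hm.toLp _)) := by
  induction h using SimpleFunc.induction with
  | @const c s hs =>
    have hm : MemLp (s.indicator (fun _ => (c:ℝ))) p P :=
      memLp_indicator_const p hs _ (Or.inr (measure_ne_top P s))
    have e : (fun x => (((SimpleFunc.piecewise s hs (SimpleFunc.const Ω c)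
      (SimpleFunc.const Ω 0)) x : ℝ≥0) : ℝ)) = s.indicator (fun _ => (c:ℝ)) := by
      ext x; by_cases hx : x ∈ s <;> simp [hx]
    refine ⟨e ▸ hm, ?_⟩
    have e2 : ∀ hm', MemLp.toLp (p := p) (μ := P)
      (fun x => (((SimpleFunc.piecewise s hs (SimpleFunc.const Ω c)
      (SimpleFunc.const Ω 0)) x : ℝ≥0) : ℝ)) hm' =
        (c:ℝ) • indicatorConstLp p hs (measure_ne_top P s) (1:ℝ) := by
      intro hm'
      rw [indicatorConstLp, ← MemLp.toLp_const_smul]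
      apply MemLp.toLp_congr
      refine Eventually.of_forall fun x => ?_
      by_cases hx : x ∈ s <;> simp [hx]
    rw [e2, map_smul, smul_eq_mul, ENNReal.ofReal_mul (NNReal.coe_nonneg c), ← hν s hs]
    have e3 : ∀ x, (((SimpleFunc.piecewise s hs (SimpleFunc.const Ω c)
      (SimpleFunc.const Ω 0)) x : ℝ≥0) : ℝ≥0∞) = s.indicator (fun _ => (c:ℝ≥0∞)) x := by
      intro x; by_cases hx : x ∈ s <;> simp [hx]
    simp_rw [e3]
    rw [lintegral_indicator_const hs]
    simp
  | @add f g _ hf hg =>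
    obtain ⟨hmf, hf⟩ := hf
    obtain ⟨hmg, hg⟩ := hg
    have pos : ∀ (k : SimpleFunc Ω ℝ≥0) (hm : MemLp (fun x => (k x : ℝ)) p P),
        0 ≤ φ (hm.toLp _) := by
      intro k hm
      apply hφ
      filter_upwards [hm.coeFn_toLp] with x hx
      rw [hx]; exact (k x).2
    have e : (fun x => (((f + g) x : ℝ≥0) : ℝ)) = (fun x => (f x : ℝ)) + fun x => (g x : ℝ) := by
      ext x; simp
    have hm : MemLp (fun x => (((f + g) x : ℝ≥0) : ℝ)) p P := e ▸ hmf.add hmg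
    refine ⟨hm, ?_⟩
    have e2 : hm.toLp _ = hmf.toLp _ + hmg.toLp _ := by
      rw [← MemLp.toLp_add]
      apply MemLp.toLp_congr
      exact Eventually.of_forall fun x => by simp
    rw [e2, map_add, ENNReal.ofReal_add (pos _ _) (pos _ _), ← hf, ← hg,
      ← lintegral_add_left f.measurable.coe_nnreal_ennreal]
    simp

lemma ky_bound {Ω : Type*} [MeasurableSpace Ω] (P : Measure Ω) [IsProbabilityMeasure P]
    (p : ℝ) (hp : 1 < p) [Fact (1 ≤ ENNReal.ofReal p)] (φ : Lp ℝ (ENNReal.ofReal p) P →L[ℝ] ℝ)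
    (hφ : ∀ h : Lp ℝ (ENNReal.ofReal p) P, (0 : Ω → ℝ) ≤ᵐ[P] (h : Ω → ℝ) → 0 ≤ φ h)
    (ν : Measure Ω) (hν : ∀ s (hs : MeasurableSet s),
      ν s = ENNReal.ofReal (φ (indicatorConstLp _ hs (measure_ne_top P s) 1)))
    (H : Ω → ℝ≥0∞) :
    ∫⁻ x, H x ∂ν ≤ ‖φ‖ₑ * (∫⁻ x, H x ^ p ∂P) ^ (1 / p) := by
  rw [lintegral_eq_nnreal]
  refine iSup₂_le fun h hh => ?_
  obtain ⟨hm, he⟩ := ky_simple P _ φ hφ ν hν h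
  have : (h.map ((↑) : ℝ≥0 → ℝ≥0∞)).lintegral ν = ∫⁻ x, h x ∂ν := by
    rw [← SimpleFunc.lintegral_eq_lintegral]; rfl
  rw [this, he]
  calc ENNReal.ofReal (φ (hm.toLp _)) ≤ ‖φ (hm.toLp _)‖ₑ := by
        rw [← ofReal_norm]; exact ENNReal.ofReal_le_ofReal (le_abs_self _)
    _ ≤ ‖φ‖ₑ * ‖hm.toLp _‖ₑ := φ.le_opENorm _
    _ ≤ _ := by
      gcongr
      rw [Lp.enorm_toLp, eLpNorm_eq_lintegral_rpow_enorm_toReal (by simp; linarith) (by simp),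
        ENNReal.toReal_ofReal (by linarith)]
      gcongr with x
      · simpa using hh x

set_option maxHeartbeats 1000000 in
lemma ky_riesz {Ω : Type*} [MeasurableSpace Ω] (P : Measure Ω) [IsProbabilityMeasure P]
    (p q : ℝ) (hpq : p.HolderConjugate q)
    [Fact (1 ≤ ENNReal.ofReal p)] [Fact (1 ≤ ENNReal.ofReal q)]
    (φ : Lp ℝ (ENNReal.ofReal p) P →L[ℝ] ℝ)
    (hφ : ∀ h : Lp ℝ (ENNReal.ofReal p) P, (0 : Ω → ℝ) ≤ᵐ[P] (h : Ω → ℝ) → 0 ≤ φ h) :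
    ∃ g : Lp ℝ (ENNReal.ofReal q) P, ((0 : Ω → ℝ) ≤ᵐ[P] (g : Ω → ℝ)) ∧
      ∀ h : Lp ℝ (ENNReal.ofReal p) P, φ h = ∫ ω, (h : Ω → ℝ) ω * (g : Ω → ℝ) ω ∂P := by
  obtain ⟨ν, hν⟩ := ky_exists_measure P _ (by simp) φ hφ
  have hfin : IsFiniteMeasure ν := ⟨by rw [hν _ MeasurableSet.univ]; simp⟩
  have hac : ν ≪ P := by
    refine Measure.AbsolutelyContinuous.mk fun s hs h0 => ?_
    rw [hν s hs]
    have : indicatorConstLp (ENNReal.ofReal p) hs (measure_ne_top P s) (1:ℝ) = 0 := by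
      rw [← norm_eq_zero, norm_indicatorConstLp (by simpa using hpq.pos) (by simp)]
      simp [Measure.real, h0, hpq.pos.le, hpq.pos.ne']
    simp [this]
  have hgm : Measurable (ν.rnDeriv P) := Measure.measurable_rnDeriv ν P
  set g := ν.rnDeriv P with hg
  have hwd : P.withDensity g = ν := Measure.withDensity_rnDeriv_eq ν P hac
  set K := ‖φ‖ₑ with hK
  have hKt : K ≠ ∞ := by simp [hK]
  have hb : ∀ n : ℕ, ∫⁻ x, (min (g x) n) ^ q ∂P ≤ K ^ q := by
    intro n
    set I := ∫⁻ x, (min (g x) n) ^ q ∂P with hI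
    have hIt : I ≠ ∞ := by
      refine ne_top_of_le_ne_top (b := ∫⁻ x, (n:ℝ≥0∞) ^ q ∂P) ?_ ?_
      · simp [hpq.symm.pos.le]
      · exact lintegral_mono fun x => ENNReal.rpow_le_rpow (min_le_right _ _) hpq.symm.pos.le
    have h1 : I ≤ K * I ^ (1 / p) := by
      calc I ≤ ∫⁻ x, g x * (min (g x) n) ^ (q - 1) ∂P := by
            apply lintegral_mono
            intro x
            dsimp only
            calc (min (g x) n) ^ q = (min (g x) n) ^ (1 + (q - 1)) := by congr 1; ring
              _ = (min (g x) n) * (min (g x) n) ^ (q - 1) := by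
                rw [ENNReal.rpow_add_of_nonneg _ _ zero_le_one hpq.symm.sub_one_pos.le,
                  ENNReal.rpow_one]
              _ ≤ _ := by gcongr; exact min_le_left _ _
        _ = ∫⁻ x, (min (g x) n) ^ (q - 1) ∂ν := by
            rw [← hwd, lintegral_withDensity_eq_lintegral_mul _ hgm (by fun_prop)]
            rfl
        _ ≤ K * (∫⁻ x, ((min (g x) n) ^ (q - 1)) ^ p ∂P) ^ (1 / p) :=
            ky_bound P p hpq.lt φ hφ ν hν _
        _ = K * I ^ (1 / p) := by
            simp_rw [← ENNReal.rpow_mul]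
            rw [hpq.symm.sub_one_mul_conj]
    by_cases hI0 : I = 0
    · rw [hI0]; exact zero_le
    have h2 : I ^ (1 / q) ≤ K := by
      have e : I = I ^ (1/q) * I ^ (1/p) := by
        rw [← ENNReal.rpow_add _ _ hI0 hIt]
        have : 1 / q + 1 / p = 1 := by simpa using hpq.symm.inv_add_inv_eq_one
        rw [this, ENNReal.rpow_one]
      have hne : I ^ (1/p) ≠ 0 := by simp [hI0, hIt]
      have hnt : I ^ (1/p) ≠ ∞ := by simp [hI0, hIt, hpq.pos.le]
      exact (ENNReal.mul_le_mul_iff_left hne hnt).1 (by rw [← e]; exact h1)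
    calc I = (I ^ (1/q)) ^ q := by
            rw [← ENNReal.rpow_mul, one_div_mul_cancel hpq.symm.pos.ne', ENNReal.rpow_one]
      _ ≤ K ^ q := by gcongr; exact hpq.symm.pos.le
  have hgt : ∀ᵐ x ∂P, g x < ∞ := Measure.rnDeriv_lt_top ν P
  have hgq : ∫⁻ x, g x ^ q ∂P ≤ K ^ q := by
    calc ∫⁻ x, g x ^ q ∂P ≤ ∫⁻ x, ⨆ n : ℕ, (min (g x) n) ^ q ∂P := by
          apply lintegral_mono_ae
          filter_upwards [hgt] with x hx
          obtain ⟨n, hn⟩ := ENNReal.exists_nat_gt hx.ne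
          refine le_iSup_of_le n ?_
          rw [min_eq_left hn.le]
      _ = ⨆ n : ℕ, ∫⁻ x, (min (g x) n) ^ q ∂P := by
          apply lintegral_iSup (fun n => by fun_prop)
          intro a b hab x
          dsimp only
          gcongr
          exact hpq.symm.pos.le
      _ ≤ _ := iSup_le hb
  have hG : MemLp (fun x => (g x).toReal) (ENNReal.ofReal q) P := by
    refine ⟨hgm.ennreal_toReal.aestronglyMeasurable, ?_⟩
    rw [eLpNorm_lt_top_iff_lintegral_rpow_enorm_lt_top (by simpa using hpq.symm.pos) (by simp),
      ENNReal.toReal_ofReal hpq.symm.pos.le]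
    refine lt_of_le_of_lt ?_ (ENNReal.rpow_lt_top_of_nonneg hpq.symm.pos.le hKt)
    refine le_trans (lintegral_mono fun x => ?_) hgq
    dsimp only
    gcongr
    · exact hpq.symm.pos.le
    · rw [← ofReal_norm]
      simpa using ENNReal.ofReal_toReal_le
  have hpq' : ENNReal.HolderConjugate (ENNReal.ofReal p) (ENNReal.ofReal q) :=
    hpq.ennrealOfReal
  obtain ⟨G, hGG⟩ : ∃ G : Lp ℝ (ENNReal.ofReal q) P, (G : Ω → ℝ) =ᵐ[P] fun x => (g x).toReal :=
    ⟨hG.toLp _, hG.coeFn_toLp⟩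
  refine ⟨G, ?_, ?_⟩
  · filter_upwards [hGG] with x hx
    rw [hx]; exact ENNReal.toReal_nonneg
  · let ψ : Lp ℝ (ENNReal.ofReal p) P →L[ℝ] ℝ :=
      ((ContinuousLinearMap.mul ℝ ℝ).lpPairing P (ENNReal.ofReal p) (ENNReal.ofReal q)).flip G
    have hψ : ∀ h, ψ h = ∫ ω, (h : Ω → ℝ) ω * (G : Ω → ℝ) ω ∂P := by
      intro h
      simp only [ψ, ContinuousLinearMap.flip_apply]
      rw [ContinuousLinearMap.lpPairing_eq_integral]
      rfl
    clear_value ψ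
    intro h
    rw [← hψ]
    induction h using Lp.induction (ENNReal.ofReal_ne_top (r := p)) with
    | @indicatorConst c s hs hμs =>
      have e1 : ((Lp.simpleFunc.indicatorConst (ENNReal.ofReal p) hs hμs.ne c :
          Lp.simpleFunc ℝ (ENNReal.ofReal p) P) : Lp ℝ (ENNReal.ofReal p) P) =
          c • indicatorConstLp (ENNReal.ofReal p) hs (measure_ne_top P s) (1:ℝ) := by
        rw [Lp.simpleFunc.coe_indicatorConst, indicatorConstLp, indicatorConstLp,
          ← MemLp.toLp_const_smul]
        apply MemLp.toLp_congr
        refine Eventually.of_forall fun x => ?_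
        by_cases hx : x ∈ s <;> simp [hx]
      rw [e1, map_smul, map_smul]
      congr 1
      have hnn : 0 ≤ φ (indicatorConstLp (ENNReal.ofReal p) hs (measure_ne_top P s) 1) := by
        apply hφ
        filter_upwards [indicatorConstLp_coeFn (p := ENNReal.ofReal p) (hs := hs)
          (hμs := measure_ne_top P s) (c := (1:ℝ))] with x hx
        rw [hx]
        exact Set.indicator_nonneg (fun _ _ => zero_le_one) x
      rw [hψ, ← ENNReal.toReal_ofReal hnn, ← hν s hs]
      have : ∫ ω, (indicatorConstLp (ENNReal.ofReal p) hs (measure_ne_top P s) (1:ℝ) : Ω → ℝ) ω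
          * (G : Ω → ℝ) ω ∂P = ∫ ω, s.indicator (fun x => (g x).toReal) ω ∂P := by
        apply integral_congr_ae
        filter_upwards [indicatorConstLp_coeFn (p := ENNReal.ofReal p) (hs := hs)
          (hμs := measure_ne_top P s) (c := (1:ℝ)), hGG] with x hx hx'
        rw [hx, hx']
        by_cases hxs : x ∈ s <;> simp [hxs]
      rw [this, integral_indicator hs, Measure.setIntegral_toReal_rnDeriv hac]
      rfl
    | add hf hg _ h1 h2 => rw [map_add, map_add, h1, h2]
    | isClosed => exact isClosed_eq φ.continuous ψ.continuous

theorem kreps_yan_separation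
    {Ω : Type*} [MeasurableSpace Ω] (P : Measure Ω) [IsProbabilityMeasure P]
    (p q : ℝ) (hp : 1 < p) (hq : 1 ≤ q) (hpq : 1 / p + 1 / q = 1)
    [Fact (1 ≤ ENNReal.ofReal p)] [Fact (1 ≤ ENNReal.ofReal q)]
    (C : Set (Lp ℝ (ENNReal.ofReal p) P))
    (hclosed : IsClosed C)
    (hzero : (0 : Lp ℝ (ENNReal.ofReal p) P) ∈ C)
    (hadd : ∀ x ∈ C, ∀ y ∈ C, x + y ∈ C)
    (hsmul : ∀ c : ℝ, 0 ≤ c → ∀ x ∈ C, c • x ∈ C)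
    (hneg : ∀ h : Lp ℝ (ENNReal.ofReal p) P,
      (0 : Ω → ℝ) ≤ᵐ[P] (h : Ω → ℝ) → -h ∈ C)
    (hpos : ∀ h ∈ C, (0 : Ω → ℝ) ≤ᵐ[P] (h : Ω → ℝ) → h = 0) :
    ∀ f : Lp ℝ (ENNReal.ofReal p) P,
      (0 : Ω → ℝ) ≤ᵐ[P] (f : Ω → ℝ) → f ≠ 0 →
      ∃ g : Lp ℝ (ENNReal.ofReal q) P,
        ((0 : Ω → ℝ) ≤ᵐ[P] (g : Ω → ℝ)) ∧
        (∀ h ∈ C, (∫ ω, (h : Ω → ℝ) ω * (g : Ω → ℝ) ω ∂P) ≤ 0) ∧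
        0 < ∫ ω, (f : Ω → ℝ) ω * (g : Ω → ℝ) ω ∂P := by
  intro f hf hf0
  have hH : p.HolderConjugate q := by
    rw [Real.holderConjugate_iff]
    exact ⟨hp, by simpa using hpq⟩
  have hfC : f ∉ C := fun h => hf0 (hpos f h hf)
  have hconv : Convex ℝ C := by
    intro x hx y hy a b ha hb _
    exact hadd _ (hsmul a ha x hx) _ (hsmul b hb y hy)
  obtain ⟨φ, u, hu, huf⟩ := geometric_hahn_banach_closed_point hconv hclosed hfC
  have hu0 : 0 < u := by simpa using hu 0 hzero
  have hC : ∀ h ∈ C, φ h ≤ 0 := by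
    intro h hh
    by_contra! hc
    have := hu _ (hsmul (u / φ h) (by positivity) h hh)
    rw [map_smul, smul_eq_mul, div_mul_cancel₀ _ hc.ne'] at this
    exact lt_irrefl _ this
  obtain ⟨g, hg0, hg⟩ := ky_riesz P p q hH φ (fun h hh => by
    have := hC _ (hneg h hh)
    rw [map_neg] at this
    linarith)
  refine ⟨g, hg0, fun h hh => ?_, ?_⟩
  · rw [← hg]; exact hC h hh
  · rw [← hg]; linarith
end
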